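/- arXiv:1612.05295 — 2 statements merged into one kernel-verified Lean document; each statement's English description precedes it below -/
import Mathlib

section
/- The maximum cardinality of an antichain of the Hamming cube {0,1}^n equipped with the partial order ⪯₁ equals M(n): every antichain has at most M(n) elements, and there exists an antichain with exactly M(n) elements. -/
/-- One step on the Hamming cube `{0,1}^n`: either an *addition* (change a 0 bit
to 1) or a *left-swap* (move a 1 one position toward the most significant bit,
i.e. replace an adjacent pair `(0,1)` by `(1,0)`). The bit at index `i : Fin n`
represents position `i + 1`; index `n - 1` is the most significant bit. -/
def CubeStep {n : ℕ} (x y : Fin n → Bool) : Prop :=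
  (∃ k : Fin n, x k = false ∧ y = Function.update x k true) ∨
  (∃ k : Fin n, ∃ hk : (k : ℕ) + 1 < n,
      x k = true ∧ x ⟨(k : ℕ) + 1, hk⟩ = false ∧
      y = Function.update (Function.update x k false) ⟨(k : ℕ) + 1, hk⟩ true)

/-- The partial order `⪯₁` on the Hamming cube: the reflexive-transitive
closure of `CubeStep`. -/
def le1 {n : ℕ} (x y : Fin n → Bool) : Prop := Relation.ReflTransGen CubeStep x y

/-- The number of subsets of `{1,…,n}` whose elements sum to `i`. -/
def levelCard (n i : ℕ) : ℕ :=
  (((Finset.Icc 1 n).powerset).filter (fun s => s.sum id = i)).card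

/-- `M n`: the maximum over `K ∈ ℕ` of the number of subsets of `{1,…,n}`
whose elements sum to `K`. -/
noncomputable def M (n : ℕ) : ℕ := ⨆ K : ℕ, levelCard n K

/-!
Let `ρ` be the sum of the positions of the 1 bits. On functions on the cube, a weighted sum `E` of
the matrices of the addition at the lowest bit and of all the left-swaps satisfies
`E Eᵀ - Eᵀ E = diag (2ρ - n(n + 1)/2)`; it is the raising operator of the principal `sl₂` in the
spin representation of `so(2n + 1)`. Since `E` only moves upwards, an antichain `A` satisfies
`#A + rank E ≤ 2ⁿ`. Since the commutator is negative below the middle level and positive above it,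
`E` is injective on functions supported below the middle and `E Eᵀ` on those supported above, and
therefore `2ⁿ ≤ rank E + #(middle level)`. Hence `A` is at most as large as the middle level, which
is itself an antichain.
-/

namespace RaisingMatrix

open Finset Matrix

theorem rank_le_rank_of_ker_le {𝕜 m n l : Type*} [Field 𝕜] [Fintype n]
    {B : Matrix l n 𝕜} {C : Matrix m n 𝕜} (h : B.mulVecLin.ker ≤ C.mulVecLin.ker) :
    C.rank ≤ B.rank := by
  have hB := B.mulVecLin.finrank_range_add_finrank_ker
  have hC := C.mulVecLin.finrank_range_add_finrank_ker
  have hker := Submodule.finrank_mono h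
  unfold Matrix.rank
  omega

theorem mulVec_apply_eq_zero {R m n : Type*} [NonUnitalNonAssocSemiring R] [Fintype n]
    {B : Matrix m n R} {f : n → R} {i : m} (h : ∀ j, B i j ≠ 0 → f j = 0) : (B *ᵥ f) i = 0 :=
  sum_eq_zero fun j _ => by
    change B i j * f j = 0
    by_cases hij : B i j = 0
    · rw [hij, zero_mul]
    · rw [h j hij, mul_zero]

variable {α 𝕜 : Type*} [Fintype α]

/- Replacing row `y` of `E` by a unit vector when `y` lies strictly below `A`, and by `0` when
`y ∈ A`, gives a matrix `B` of rank at most `#Aᶜ` whose kernel lies in that of `E`. -/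
theorem card_add_rank_le_card_of_isAntichain [Field 𝕜] {r : α → α → Prop} [IsStrictOrder α r]
    {E : Matrix α α 𝕜} (hE : ∀ x y, E y x ≠ 0 → r x y) {A : Finset α}
    (hA : IsAntichain r (A : Set α)) : #A + E.rank ≤ Fintype.card α := by
  classical
  let Below (x : α) : Prop := ∃ a ∈ A, r x a
  let B : Matrix α α 𝕜 := fun y => if Below y then Pi.single y 1 else if y ∈ A then 0 else E y
  have not_below {x : α} (hx : x ∈ A) : ¬Below x := fun ⟨_, ha, hxa⟩ =>
    hA hx ha (ne_of_irrefl hxa) hxa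
  have hB : B.rank ≤ #Aᶜ := B.rank_le_card_of_support_subset Aᶜ fun y hy => by
    rw [coe_compl]
    intro hyA
    exact hy (by simp [B, Matrix.row, not_below hyA, mem_coe.1 hyA])
  have hker : B.mulVecLin.ker ≤ E.mulVecLin.ker := fun f hf => by
    have hBf (y : α) : B y ⬝ᵥ f = 0 := congrFun hf y
    have f_eq_zero {x : α} (hx : Below x) : f x = 0 := by simpa [B, hx] using hBf x
    refine funext fun y => ?_
    by_cases hy : Below y
    · obtain ⟨a, ha, hya⟩ := hy
      exact mulVec_apply_eq_zero fun x hyx => f_eq_zero ⟨a, ha, _root_.trans (hE x y hyx) hya⟩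
    by_cases hyA : y ∈ A
    · exact mulVec_apply_eq_zero fun x hyx => f_eq_zero ⟨y, hyA, hE x y hyx⟩
    · simpa [B, hy, hyA] using! hBf y
  have := rank_le_rank_of_ker_le hker
  have := card_add_card_compl A
  omega

theorem lie_sum_smul_transpose {ι R : Type*} [Fintype ι] [CommRing R] (c : ι → R)
    (X : ι → Matrix α α R) (hX : ∀ i j, i ≠ j → ⁅X i, (X j)ᵀ⁆ = 0) :
    ⁅∑ i, c i • X i, (∑ i, c i • X i)ᵀ⁆ = ∑ i, (c i * c i) • ⁅X i, (X i)ᵀ⁆ := by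
  have hcomm : ⁅∑ i, c i • X i, (∑ i, c i • X i)ᵀ⁆ = ∑ i, ∑ j, (c i * c j) • ⁅X i, (X j)ᵀ⁆ := by
    simp only [Ring.lie_def, transpose_sum, transpose_smul, sum_mul_sum, smul_sub,
      sum_sub_distrib, smul_mul_smul_comm]
    rw [sum_comm (f := fun i j => (c i * c j) • ((X i)ᵀ * X j))]
    simp only [mul_comm]
  rw [hcomm]
  exact sum_congr rfl fun i _ =>
    Fintype.sum_eq_single i fun j hj => by rw [hX i j hj.symm, smul_zero]

theorem dotProduct_lie_transpose_mulVec {R : Type*} [CommRing R] (E : Matrix α α R) (f : α → R) :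
    f ⬝ᵥ ⁅E, Eᵀ⁆ *ᵥ f = (Eᵀ *ᵥ f) ⬝ᵥ (Eᵀ *ᵥ f) - (E *ᵥ f) ⬝ᵥ (E *ᵥ f) := by
  simp only [Ring.lie_def, sub_mulVec, dotProduct_sub, ← mulVec_mulVec, dotProduct_mulVec f,
    ← mulVec_transpose, transpose_transpose]

section OrderedRing

variable {R : Type*} [CommRing R] [LinearOrder R] [IsStrictOrderedRing R] [DecidableEq α]
  {E : Matrix α α R} {d f : α → R}

theorem eq_zero_of_mulVec_eq_zero (hd : ⁅E, Eᵀ⁆ = diagonal d) (hEf : E *ᵥ f = 0)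
    (hf : ∀ x, f x ≠ 0 → d x < 0) : f = 0 := by
  have hsum : 0 ≤ ∑ x, d x * f x ^ 2 := calc
    0 ≤ (Eᵀ *ᵥ f) ⬝ᵥ (Eᵀ *ᵥ f) := sum_nonneg fun _ _ => mul_self_nonneg _
    _ = f ⬝ᵥ ⁅E, Eᵀ⁆ *ᵥ f := by simp [dotProduct_lie_transpose_mulVec, hEf]
    _ = ∑ x, d x * f x ^ 2 := by
      rw [hd]
      exact sum_congr rfl fun x _ => by rw [mulVec_diagonal]; ring
  by_contra hne
  obtain ⟨x, hx⟩ := Function.ne_iff.1 hne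
  refine hsum.not_gt (sum_neg' (fun y _ => ?_)
    ⟨x, mem_univ x, mul_neg_of_neg_of_pos (hf x hx) (sq_pos_of_ne_zero hx)⟩)
  by_cases hy : f y = 0
  · simp [hy]
  · exact mul_nonpos_of_nonpos_of_nonneg (hf y hy).le (sq_nonneg _)

theorem eq_zero_of_mul_transpose_mulVec_eq_zero (hd : ⁅E, Eᵀ⁆ = diagonal d)
    (hEf : (E * Eᵀ) *ᵥ f = 0) (hf : ∀ x, f x ≠ 0 → 0 < d x) : f = 0 := by
  have hEtf : Eᵀ *ᵥ f = 0 := by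
    rw [← dotProduct_self_eq_zero, dotProduct_mulVec, vecMul_transpose, mulVec_mulVec, hEf,
      zero_dotProduct]
  refine eq_zero_of_mulVec_eq_zero (E := Eᵀ) (d := fun x => -d x) ?_ hEtf
    fun x hx => neg_lt_zero.2 (hf x hx)
  rw [transpose_transpose, ← diagonal_neg, ← hd, Ring.lie_def, Ring.lie_def, neg_sub]

variable {β : Type*} [LinearOrder β] {ρ : α → β} {m : β}

theorem eq_zero_and_eq_zero_of_mulVec_add_eq_zero (hE : ∀ x y, E y x ≠ 0 → ρ x ⋖ ρ y)
    (hd : ⁅E, Eᵀ⁆ = diagonal d) (hneg : ∀ x, ρ x < m → d x < 0) (hpos : ∀ x, m < ρ x → 0 < d x)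
    {g h : α → R} (hg : ∀ x, g x ≠ 0 → ρ x < m) (hh : ∀ x, h x ≠ 0 → m < ρ x)
    (hgh : E *ᵥ g + (E * Eᵀ) *ᵥ h = 0) : g = 0 ∧ h = 0 := by
  have hEg {y : α} (hy : m < ρ y) : (E *ᵥ g) y = 0 := mulVec_apply_eq_zero fun x hyx => by
    by_contra hx
    exact (hE x y hyx).2 (hg x hx) hy
  have hEth {y : α} (hy : ρ y < m) : (Eᵀ *ᵥ h) y = 0 := mulVec_apply_eq_zero fun x hxy => by
    by_contra hx
    exact (hE y x hxy).2 hy (hh x hx)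
  have hEEth {y : α} (hy : ρ y ≤ m) : ((E * Eᵀ) *ᵥ h) y = 0 := by
    rw [← mulVec_mulVec]
    exact mulVec_apply_eq_zero fun x hyx => hEth ((hE x y hyx).1.trans_le hy)
  have hsum (y : α) : (E *ᵥ g) y + ((E * Eᵀ) *ᵥ h) y = 0 := congrFun hgh y
  have hg0 : E *ᵥ g = 0 := funext fun y => by
    rcases lt_or_ge m (ρ y) with hy | hy
    · exact hEg hy
    · simpa [hEEth hy] using hsum y
  have hh0 : (E * Eᵀ) *ᵥ h = 0 := by simpa [hg0] using hgh
  exact ⟨eq_zero_of_mulVec_eq_zero hd hg0 fun x hx => hneg x (hg x hx),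
    eq_zero_of_mul_transpose_mulVec_eq_zero hd hh0 fun x hx => hpos x (hh x hx)⟩

end OrderedRing

variable [Field 𝕜] [LinearOrder 𝕜] [IsStrictOrderedRing 𝕜] [DecidableEq α] {E : Matrix α α 𝕜}
  {d : α → 𝕜} {β : Type*} [LinearOrder β] {ρ : α → β} {m : β}

theorem card_le_rank_add_card_level (hE : ∀ x y, E y x ≠ 0 → ρ x ⋖ ρ y)
    (hd : ⁅E, Eᵀ⁆ = diagonal d) (hneg : ∀ x, ρ x < m → d x < 0) (hpos : ∀ x, m < ρ x → 0 < d x) :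
    Fintype.card α ≤ E.rank + #{x | ρ x = m} := by
  let cutoff (p : α → Prop) [DecidablePred p] : Matrix α α 𝕜 :=
    diagonal fun x => if p x then 1 else 0
  have cutoff_mulVec (p : α → Prop) [DecidablePred p] (f : α → 𝕜) (x : α) :
      (cutoff p *ᵥ f) x = if p x then f x else 0 := by
    simp [cutoff, mulVec_diagonal]
  let low := cutoff (ρ · < m)
  let high := cutoff (m < ρ ·)
  let off := cutoff (¬ρ · = m)
  have hker : (E * (low + Eᵀ * high)).mulVecLin.ker ≤ off.mulVecLin.ker := fun f hf => by
    obtain ⟨hlow, hhigh⟩ := eq_zero_and_eq_zero_of_mulVec_add_eq_zero hE hd hneg hpos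
      (g := low *ᵥ f) (h := high *ᵥ f) (by simp +contextual [low, cutoff_mulVec])
      (by simp +contextual [high, cutoff_mulVec])
      (by simpa only [LinearMap.mem_ker, mulVecLin_apply, mul_add, add_mulVec, mul_assoc,
        mulVec_mulVec] using hf)
    refine funext fun x => ?_
    rcases lt_trichotomy (ρ x) m with h | h | h
    · simpa [off, low, cutoff_mulVec, h, h.ne] using congrFun hlow x
    · simp [off, cutoff_mulVec, h]
    · simpa [off, high, cutoff_mulVec, h, h.ne'] using congrFun hhigh x
  have hrank : off.rank ≤ E.rank := (rank_le_rank_of_ker_le hker).trans (rank_mul_le_left _ _)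
  have hoff : off.rank = #{x | ¬ρ x = m} := by
    simp [off, cutoff, rank_diagonal, Fintype.card_subtype]
  have := card_filter_add_card_filter_not (s := univ) fun x => ρ x = m
  rw [card_univ] at this
  omega

theorem card_le_card_level_of_isAntichain {r : α → α → Prop} [IsStrictOrder α r]
    (hEr : ∀ x y, E y x ≠ 0 → r x y) (hE : ∀ x y, E y x ≠ 0 → ρ x ⋖ ρ y)
    (hd : ⁅E, Eᵀ⁆ = diagonal d) (hneg : ∀ x, ρ x < m → d x < 0) (hpos : ∀ x, m < ρ x → 0 < d x)
    {A : Finset α} (hA : IsAntichain r (A : Set α)) : #A ≤ #{x | ρ x = m} := by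
  have := card_add_rank_le_card_of_isAntichain hEr hA
  have := card_le_rank_add_card_level hE hd hneg hpos
  omega

end RaisingMatrix

namespace CubeOrder

open Finset Matrix RaisingMatrix

variable {n : ℕ}

/-- The sum of the positions of the 1 bits: the rank function of `⪯₁`. -/
def level (x : Fin n → Bool) : ℕ := ∑ i, if x i then (i : ℕ) + 1 else 0

theorem level_update_true (x : Fin n → Bool) (k : Fin n) :
    level (Function.update x k true) = level (Function.update x k false) + (k + 1) := by
  have hoff (b : Bool) : ∀ i ∈ univ.erase k, Function.update x k b i = x i := fun i hi =>
    Function.update_of_ne (ne_of_mem_erase hi) ..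
  simp +contextual only [level, ← add_sum_erase univ _ (mem_univ k), Function.update_self, hoff]
  simp [add_comm]

theorem level_update_update {x : Fin n → Bool} {k l : Fin n} (hk : x k = true)
    (hl : x l = false) :
    level (Function.update (Function.update x k false) l true) + k = level x + l := by
  have hkl : l ≠ k := fun h => by simp [h, hk] at hl
  have hadd := level_update_true (Function.update x k false) l
  have hdel := level_update_true x k
  have hl' : Function.update (Function.update x k false) l false = Function.update x k false :=
    Function.update_eq_self_iff.2 (by rw [Function.update_of_ne hkl, hl])
  rw [hl'] at hadd
  rw [← hk, Function.update_eq_self] at hdel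
  omega

theorem level_lt_of_cubeStep {x y : Fin n → Bool} (h : CubeStep x y) : level x < level y := by
  rcases h with ⟨k, hk, rfl⟩ | ⟨k, hlt, hk, hl, rfl⟩
  · have := level_update_true x k
    rw [← hk, Function.update_eq_self] at this
    omega
  · have : _ + (k : ℕ) = level x + (k + 1) := level_update_update hk hl
    omega

theorem level_lt_of_transGen {x y : Fin n → Bool} (h : Relation.TransGen CubeStep x y) :
    level x < level y := by
  induction h with
  | single h => exact level_lt_of_cubeStep h
  | tail _ h ih => exact ih.trans (level_lt_of_cubeStep h)

instance : IsStrictOrder (Fin n → Bool) (Relation.TransGen CubeStep) where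
  irrefl _ h := (level_lt_of_transGen h).false
  trans _ _ _ := Relation.TransGen.trans

theorem le1_iff_transGen_of_ne {x y : Fin n → Bool} (h : x ≠ y) :
    le1 x y ↔ Relation.TransGen CubeStep x y := by
  rw [le1, Relation.reflTransGen_iff_eq_or_transGen, or_iff_right h.symm]

theorem isAntichain_setOf_level_eq (K : ℕ) :
    IsAntichain (Relation.TransGen CubeStep) {x : Fin n → Bool | level x = K} :=
  fun _ hx _ hy _ h => (level_lt_of_transGen h).ne (hx.trans hy.symm)

/-- The involution flipping bit `k` and, when `k ≠ 0`, also bit `k - 1`. On the vertices where the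
addition at `0` or the left-swap from `k - 1` to `k` applies, it performs that move. -/
def toggle (k : Fin n) (x : Fin n → Bool) : Fin n → Bool :=
  fun i => if i = k ∨ (i : ℕ) + 1 = k then !x i else x i

/-- `y` is the result of the move that `toggle k` performs: the addition at `0` if `k = 0`, and the
left-swap from `k - 1` to `k` otherwise. -/
def IsRaised (k : Fin n) (y : Fin n → Bool) : Prop :=
  y k = true ∧ ∀ j : Fin n, (j : ℕ) + 1 = k → y j = false

instance (k : Fin n) : DecidablePred (IsRaised k) :=
  fun y => inferInstanceAs (Decidable (y k = true ∧ _))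

theorem toggle_toggle (k : Fin n) (x : Fin n → Bool) : toggle k (toggle k x) = x := by
  funext i
  simp only [toggle]
  split_ifs <;> simp

theorem toggle_comm (j k : Fin n) (x : Fin n → Bool) :
    toggle j (toggle k x) = toggle k (toggle j x) := by
  funext i
  simp only [toggle]
  split_ifs <;> rfl

theorem eq_toggle_comm {k : Fin n} {x y : Fin n → Bool} : x = toggle k y ↔ y = toggle k x :=
  ⟨fun h => by rw [h, toggle_toggle], fun h => by rw [h, toggle_toggle]⟩

/- Adjacent moves make both sides false; all others affect disjoint sets of bits. -/
theorem isRaised_and_isRaised_toggle_iff {j k : Fin n} (hjk : j ≠ k) (y : Fin n → Bool) :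
    IsRaised j y ∧ IsRaised k (toggle k (toggle j y)) ↔
      IsRaised k (toggle k y) ∧ IsRaised j (toggle k y) := by
  unfold IsRaised toggle
  grind

theorem isRaised_zero_iff {y : Fin (n + 1) → Bool} : IsRaised 0 y ↔ y 0 = true := by
  simp [IsRaised]

theorem isRaised_succ_iff {k : Fin n} {y : Fin (n + 1) → Bool} :
    IsRaised k.succ y ↔ y k.succ = true ∧ y k.castSucc = false := by
  have hpred (j : Fin (n + 1)) : (j : ℕ) + 1 = k.succ ↔ j = k.castSucc := by simp [Fin.ext_iff]
  simp only [IsRaised, hpred, forall_eq]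

theorem update_toggle_zero {y : Fin (n + 1) → Bool} (h : IsRaised 0 y) :
    Function.update (toggle 0 y) 0 true = y := by
  rw [isRaised_zero_iff] at h
  funext i
  by_cases hi : i = 0 <;> simp [toggle, hi, h]

theorem update_update_toggle_succ {k : Fin n} {y : Fin (n + 1) → Bool} (h : IsRaised k.succ y) :
    Function.update (Function.update (toggle k.succ y) k.castSucc false) k.succ true = y := by
  obtain ⟨hk, hj⟩ := isRaised_succ_iff.1 h
  funext i
  rcases eq_or_ne i k.succ with rfl | hik
  · simp [hk]
  rcases eq_or_ne i k.castSucc with rfl | hij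
  · simp [hj, hik]
  · have : (i : ℕ) ≠ k := fun h => hij (Fin.ext h)
    simp [toggle, hik, hij, this]

theorem cubeStep_toggle {k : Fin n} {y : Fin n → Bool} (h : IsRaised k y) :
    CubeStep (toggle k y) y := by
  obtain _ | n := n
  · exact k.elim0
  cases k using Fin.cases with
  | zero => exact .inl ⟨0, by simp [toggle, h.1], (update_toggle_zero h).symm⟩
  | succ k =>
    have hk := isRaised_succ_iff.1 h
    exact .inr ⟨k.castSucc, k.succ.isLt, by simp [toggle, hk],
      by
        change toggle k.succ y k.succ = false
        simp [toggle, hk.1], (update_update_toggle_succ h).symm⟩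

theorem level_toggle_add_one {k : Fin n} {y : Fin n → Bool} (h : IsRaised k y) :
    level (toggle k y) + 1 = level y := by
  obtain _ | n := n
  · exact k.elim0
  cases k using Fin.cases with
  | zero =>
    have := level_update_true (toggle 0 y) 0
    have hz : Function.update (toggle 0 y) 0 false = toggle 0 y := by
      simp [toggle, h.1]
    rw [hz, update_toggle_zero h] at this
    simpa using this.symm
  | succ k =>
    obtain ⟨hk, hj⟩ := isRaised_succ_iff.1 h
    have := level_update_update (x := toggle k.succ y) (k := k.castSucc) (l := k.succ)
      (by simp [toggle, hj]) (by simp [toggle, hk])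
    rw [update_update_toggle_succ h, Fin.val_castSucc, Fin.val_succ] at this
    omega

/-- The squared coefficient of the `k`-th move in the raising operator of the principal `sl₂` in the
spin representation of `so(2n + 1)`. The numbers `n(n + 1) - k(k + 1)` decrease by `2(k + 1)`, twice
the position of bit `k`, so Abel summation of the commutator yields twice the level; the value at
`k = 0` is halved because `toggle 0` changes one bit only. -/
noncomputable def coeff (k : Fin n) : ℝ :=
  if (k : ℕ) = 0 then n * (n + 1) / 2 else n * (n + 1) - k * (k + 1)

theorem coeff_nonneg (k : Fin n) : 0 ≤ coeff k := by
  unfold coeff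
  split_ifs
  · positivity
  · have : (k : ℝ) ≤ n := by exact_mod_cast k.isLt.le
    have : (k : ℝ) * (k + 1) ≤ n * (n + 1) := by gcongr
    linarith

theorem sum_mul_succ_sub_castSucc {R : Type*} [CommRing R] (c : ℕ → R) (b : Fin (n + 1) → R) :
    ∑ i : Fin n, c (i + 1) * (b i.succ - b i.castSucc) =
      ∑ i : Fin (n + 1), (c i - c (i + 1)) * b i - c 0 * b 0 + c (n + 1) * b (Fin.last n) := by
  have hsucc := Fin.sum_univ_succ fun i : Fin (n + 1) => c i * b i
  have hcast := Fin.sum_univ_castSucc fun i : Fin (n + 1) => c (i + 1) * b i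
  simp only [Fin.val_zero, Fin.val_succ, Fin.val_castSucc, Fin.val_last] at hsucc hcast
  simp only [mul_sub, sub_mul, sum_sub_distrib, hsucc, hcast]
  ring

theorem ite_isRaised_zero_sub (y : Fin (n + 1) → Bool) :
    ((if IsRaised 0 y then 1 else 0) - (if IsRaised 0 (toggle 0 y) then 1 else 0) : ℝ) =
      2 * (if y 0 then 1 else 0) - 1 := by
  simp only [isRaised_zero_iff, toggle]
  cases y 0 <;> norm_num

theorem ite_isRaised_succ_sub (k : Fin n) (y : Fin (n + 1) → Bool) :
    ((if IsRaised k.succ y then 1 else 0) - (if IsRaised k.succ (toggle k.succ y) then 1 else 0)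
      : ℝ) = (if y k.succ then 1 else 0) - (if y k.castSucc then 1 else 0) := by
  simp only [isRaised_succ_iff, toggle]
  cases y k.succ <;> cases y k.castSucc <;> norm_num

theorem sum_coeff_mul_ite_isRaised_sub (y : Fin n → Bool) :
    ∑ k, coeff k * ((if IsRaised k y then 1 else 0) - (if IsRaised k (toggle k y) then 1 else 0)) =
      2 * (level y : ℝ) - n * (n + 1) / 2 := by
  obtain _ | n := n
  · simp [level]
  let b (i : Fin (n + 1)) : ℝ := if y i then 1 else 0
  let c (k : ℕ) : ℝ := (n + 1) * (n + 2) - k * (k + 1)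
  have hlevel : 2 * (level y : ℝ) = ∑ i : Fin (n + 1), (c i - c (i + 1)) * b i := by
    simp only [level, Nat.cast_sum, mul_sum, b, c]
    refine sum_congr rfl fun i _ => ?_
    split_ifs
    · push_cast
      ring
    · simp
  have hzero : coeff (0 : Fin (n + 1)) = c 0 / 2 := by
    simp only [coeff, Fin.val_zero, if_true, c]
    push_cast
    ring
  have hsucc (k : Fin n) : coeff k.succ = c (k + 1) := by
    simp only [coeff, Fin.val_succ, Nat.succ_ne_zero, if_false, c]
    push_cast
    ring
  have hlast : c (n + 1) = 0 := by
    simp only [c]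
    push_cast
    ring
  calc ∑ k, coeff k * ((if IsRaised k y then 1 else 0) - (if IsRaised k (toggle k y) then 1 else 0))
      = c 0 / 2 * (2 * b 0 - 1) + ∑ k : Fin n, c (k + 1) * (b k.succ - b k.castSucc) := by
        simp only [Fin.sum_univ_succ, hzero, hsucc, ite_isRaised_zero_sub, ite_isRaised_succ_sub, b]
    _ = 2 * level y - c 0 / 2 := by
        rw [sum_mul_succ_sub_castSucc, ← hlevel, hlast]
        ring
    _ = _ := by
        simp only [c]
        push_cast
        ring

/-- The matrix of the `k`-th move: it sends the basis vector of `toggle k y` to that of `y` whenever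
`IsRaised k y`, and all other basis vectors to `0`. -/
def moveMatrix (k : Fin n) : Matrix (Fin n → Bool) (Fin n → Bool) ℝ :=
  .of fun y x => if IsRaised k y ∧ x = toggle k y then 1 else 0

theorem moveMatrix_mul_transpose_apply (j k : Fin n) (y x : Fin n → Bool) :
    (moveMatrix j * (moveMatrix k)ᵀ) y x =
      if (IsRaised j y ∧ IsRaised k (toggle k (toggle j y))) ∧ x = toggle k (toggle j y)
        then 1 else 0 := by
  rw [mul_apply, Fintype.sum_eq_single (toggle j y) fun z hz => by simp [moveMatrix, hz]]
  simp only [moveMatrix, transpose_apply, of_apply, eq_toggle_comm (y := x)]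
  by_cases hx : x = toggle k (toggle j y) <;> simp [hx, and_comm, ← ite_and]

theorem transpose_mul_moveMatrix_apply (j k : Fin n) (y x : Fin n → Bool) :
    ((moveMatrix k)ᵀ * moveMatrix j) y x =
      if (IsRaised k (toggle k y) ∧ IsRaised j (toggle k y)) ∧ x = toggle k (toggle j y)
        then 1 else 0 := by
  rw [mul_apply, Fintype.sum_eq_single (toggle k y) fun z hz => by
    simp [moveMatrix, eq_toggle_comm (x := y), hz]]
  by_cases hx : x = toggle k (toggle j y) <;>
    simp [moveMatrix, toggle_toggle, toggle_comm j k, hx, and_comm, ← ite_and]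

theorem lie_moveMatrix_transpose_of_ne {j k : Fin n} (hjk : j ≠ k) :
    ⁅moveMatrix j, (moveMatrix k)ᵀ⁆ = 0 := by
  rw [Ring.lie_def, sub_eq_zero]
  ext y x
  simp only [moveMatrix_mul_transpose_apply, transpose_mul_moveMatrix_apply,
    isRaised_and_isRaised_toggle_iff hjk]

theorem lie_moveMatrix_transpose_self (k : Fin n) :
    ⁅moveMatrix k, (moveMatrix k)ᵀ⁆ = diagonal fun y =>
      (if IsRaised k y then 1 else 0) - (if IsRaised k (toggle k y) then 1 else 0) := by
  ext y x
  simp only [Ring.lie_def, Matrix.sub_apply, moveMatrix_mul_transpose_apply,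
    transpose_mul_moveMatrix_apply, toggle_toggle, diagonal_apply, eq_comm (a := x)]
  by_cases h : y = x
  · subst h
    simp +contextual
  · simp [h]

/-- The raising operator of the principal `sl₂` on the functions on the cube. -/
noncomputable def raiseMatrix (n : ℕ) : Matrix (Fin n → Bool) (Fin n → Bool) ℝ :=
  ∑ k, √(coeff k) • moveMatrix k

theorem exists_isRaised_of_raiseMatrix_ne_zero {x y : Fin n → Bool} (h : raiseMatrix n y x ≠ 0) :
    ∃ k, IsRaised k y ∧ x = toggle k y := by
  rw [raiseMatrix, Matrix.sum_apply] at h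
  obtain ⟨k, -, hk⟩ := exists_ne_zero_of_sum_ne_zero h
  refine ⟨k, ?_⟩
  by_contra hne
  exact hk (by simp [moveMatrix, hne])

theorem lie_raiseMatrix_transpose (n : ℕ) :
    ⁅raiseMatrix n, (raiseMatrix n)ᵀ⁆ =
      diagonal fun y => 2 * (level y : ℝ) - n * (n + 1) / 2 := by
  rw [raiseMatrix, lie_sum_smul_transpose _ _ fun _ _ => lie_moveMatrix_transpose_of_ne]
  simp only [Real.mul_self_sqrt (coeff_nonneg _), lie_moveMatrix_transpose_self,
    ← sum_coeff_mul_ite_isRaised_sub]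
  ext y x
  by_cases h : y = x <;> simp [Matrix.sum_apply, h]

theorem cubeStep_of_raiseMatrix_ne_zero {x y : Fin n → Bool} (h : raiseMatrix n y x ≠ 0) :
    CubeStep x y := by
  obtain ⟨k, hk, rfl⟩ := exists_isRaised_of_raiseMatrix_ne_zero h
  exact cubeStep_toggle hk

theorem level_covBy_of_raiseMatrix_ne_zero {x y : Fin n → Bool} (h : raiseMatrix n y x ≠ 0) :
    level x ⋖ level y := by
  obtain ⟨k, hk, rfl⟩ := exists_isRaised_of_raiseMatrix_ne_zero h
  exact Order.covBy_iff_add_one_eq.2 (level_toggle_add_one hk)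

theorem card_le_card_level_eq_of_isAntichain {A : Finset (Fin n → Bool)}
    (hA : IsAntichain (Relation.TransGen CubeStep) (A : Set (Fin n → Bool))) :
    #A ≤ #{x : Fin n → Bool | level x = n * (n + 1) / 4} := by
  refine card_le_card_level_of_isAntichain (E := raiseMatrix n)
    (fun _ _ h => .single (cubeStep_of_raiseMatrix_ne_zero h))
    (fun _ _ => level_covBy_of_raiseMatrix_ne_zero) (lie_raiseMatrix_transpose n)
    (fun x hx => ?_) (fun x hx => ?_) hA
  · have : (4 * level x : ℝ) < n * (n + 1) := by
      exact_mod_cast (by omega : 4 * level x < n * (n + 1))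
    linarith
  · have : (n * (n + 1) : ℝ) < 4 * level x := by
      exact_mod_cast (by omega : n * (n + 1) < 4 * level x)
    linarith

/-- The subset of `{1, …, n}` whose indicator is `x`. -/
def support (x : Fin n → Bool) : Finset ℕ :=
  ({i | x i} : Finset (Fin n)).image fun i : Fin n => (i : ℕ) + 1

theorem mem_support {x : Fin n → Bool} {i : Fin n} : (i : ℕ) + 1 ∈ support x ↔ x i := by
  simp [support, Fin.val_inj]

theorem support_subset_Icc (x : Fin n → Bool) : support x ⊆ Icc 1 n :=
  image_subset_iff.2 fun i _ => mem_Icc.2 ⟨Nat.succ_pos _, i.isLt⟩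

theorem support_injective : Function.Injective (support : (Fin n → Bool) → Finset ℕ) :=
  fun x y h => funext fun i => Bool.eq_iff_iff.2 (by rw [← mem_support, h, mem_support])

theorem exists_support_eq {s : Finset ℕ} (hs : s ⊆ Icc 1 n) :
    ∃ x : Fin n → Bool, support x = s := by
  refine ⟨fun i => (i : ℕ) + 1 ∈ s, Finset.ext fun a => ?_⟩
  by_cases ha : a ∈ Icc 1 n
  · obtain ⟨i, rfl⟩ : ∃ i : Fin n, (i : ℕ) + 1 = a :=
      ⟨⟨a - 1, by grind⟩, by grind⟩
    rw [mem_support, decide_eq_true_eq]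
  · exact iff_of_false (fun h => ha (support_subset_Icc _ h)) (fun h => ha (hs h))

theorem sum_support (x : Fin n → Bool) : (support x).sum id = level x := by
  rw [support, sum_image fun i _ j _ h => Fin.ext (Nat.succ_injective h), sum_filter]
  rfl

theorem card_level_eq (n K : ℕ) : #{x : Fin n → Bool | level x = K} = levelCard n K := by
  rw [levelCard, ← card_image_of_injective _ support_injective]
  congr 1
  ext s
  simp only [mem_image, mem_filter, mem_univ, true_and, mem_powerset]
  constructor
  · rintro ⟨x, rfl, rfl⟩
    exact ⟨support_subset_Icc x, sum_support x⟩
  · rintro ⟨hs, rfl⟩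
    obtain ⟨x, rfl⟩ := exists_support_eq hs
    exact ⟨x, (sum_support x).symm, rfl⟩

theorem bddAbove_range_levelCard (n : ℕ) : BddAbove (Set.range (levelCard n)) :=
  ⟨#(Icc 1 n).powerset, Set.forall_mem_range.2 fun _ => card_filter_le _ _⟩

theorem exists_levelCard_eq_M (n : ℕ) : ∃ K, levelCard n K = M n :=
  Nat.sSup_mem (Set.range_nonempty _) (bddAbove_range_levelCard n)

theorem isAntichain_transGen_iff {A : Finset (Fin n → Bool)} :
    IsAntichain (Relation.TransGen CubeStep) (A : Set (Fin n → Bool)) ↔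
      ∀ x ∈ A, ∀ y ∈ A, x ≠ y → ¬ le1 x y :=
  forall₅_congr fun _ _ _ _ h => not_congr (le1_iff_transGen_of_ne h).symm

end CubeOrder

/-- The maximum cardinality of an antichain of the Hamming cube `({0,1}ⁿ, ⪯₁)`
equals `M n`: every antichain has at most `M n` elements and some antichain has
exactly `M n` elements. -/
theorem stmt5 (n : ℕ) :
    IsGreatest {k : ℕ | ∃ A : Finset (Fin n → Bool),
        (∀ x ∈ A, ∀ y ∈ A, x ≠ y → ¬ le1 x y) ∧ A.card = k}
      (M n) := by
  simp only [← CubeOrder.isAntichain_transGen_iff]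
  constructor
  · obtain ⟨K, hK⟩ := CubeOrder.exists_levelCard_eq_M n
    refine ⟨({x | CubeOrder.level x = K} : Finset _), ?_, (CubeOrder.card_level_eq n K).trans hK⟩
    simpa using CubeOrder.isAntichain_setOf_level_eq K
  · rintro _ ⟨A, hA, rfl⟩
    calc A.card
      _ ≤ _ := CubeOrder.card_le_card_level_eq_of_isAntichain hA
      _ = levelCard n (n * (n + 1) / 4) := CubeOrder.card_level_eq n _
      _ ≤ M n := le_ciSup (CubeOrder.bddAbove_range_levelCard n) _
end

section
/- The minimum number of chains into which the Hamming cube {0,1}^n equipped with the partial order ⪯₁ can be partitioned equals M(n). -/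
/-!
The number of chains is at least `M n` because the rank of a string (the sum of the positions of its
ones) strictly increases along `⪯₁`, so each rank level is an antichain.

Conversely, call `U` the weighted sum of the operators raising a string by a rank-one step. For
suitable weights (those of the spin representation of `𝔰𝔬(2n+1)` restricted to its principal `𝔰𝔩₂`),
the commutator of `U` with its transpose is diagonal, with entry `n(n+1)/2 - 2 rank x` at `x`.
Positivity of this entry below the middle rank makes `U` injective there, so Hall's theorem yields a
matching of the strings below the middle with strings one rank higher; the transpose of `U` gives
the matchings above the middle. Following the matchings to the middle level sorts the strings into
chains, one for each string of that level.
-/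

open Finset Matrix

section Commutator

variable {α R : Type*} [Fintype α] [DecidableEq α] [CommRing R] [LinearOrder R]
  [IsStrictOrderedRing R] {A : Matrix α α R} {d : α → R}

lemma eq_zero_of_vecMul_eq_zero_of_commutator_eq_diagonal (hA : A * Aᵀ - Aᵀ * A = diagonal d)
    {v : α → R} (hd : ∀ x, v x ≠ 0 → 0 < d x) (hv : v ᵥ* A = 0) : v = 0 := by
  have hsum : (v ᵥ* Aᵀ) ⬝ᵥ (v ᵥ* Aᵀ) + ∑ x, d x * (v x * v x) = 0 := by
    have hquad : (v ᵥ* (A * Aᵀ - Aᵀ * A)) ⬝ᵥ v = ∑ x, d x * (v x * v x) := by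
      rw [hA]
      simp only [dotProduct, vecMul_diagonal]
      exact sum_congr rfl fun x _ => by ring
    rw [← hquad, vecMul_sub, sub_dotProduct, ← vecMul_vecMul, ← vecMul_vecMul, hv, zero_vecMul,
      zero_dotProduct, zero_sub, vecMul_transpose, dotProduct_mulVec, add_neg_cancel]
  have hterm : ∀ x, 0 ≤ d x * (v x * v x) := fun x => by
    by_cases hx : v x = 0
    · simp [hx]
    · exact mul_nonneg (hd x hx).le (mul_self_nonneg _)
  have hsq : 0 ≤ (v ᵥ* Aᵀ) ⬝ᵥ (v ᵥ* Aᵀ) := sum_nonneg fun _ _ => mul_self_nonneg _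
  have hzero : ∑ x, d x * (v x * v x) = 0 :=
    le_antisymm (by linarith) (sum_nonneg fun x _ => hterm x)
  ext x
  by_contra hx
  have hxzero := (sum_eq_zero_iff_of_nonneg fun x _ => hterm x).1 hzero x (mem_univ x)
  exact (mul_pos (hd x hx) (mul_self_pos.2 hx)).ne' hxzero

lemma card_le_card_of_commutator_eq_diagonal (hA : A * Aᵀ - Aᵀ * A = diagonal d) {S T : Finset α}
    (hd : ∀ x ∈ S, 0 < d x) (hT : ∀ x ∈ S, ∀ y, A x y ≠ 0 → y ∈ T) : #S ≤ #T := by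
  let extend : (S → R) →ₗ[R] (α → R) := Function.ExtendByZero.linearMap R Subtype.val
  have extend_mem (v : S → R) (x : S) : extend v x = v x :=
    Subtype.val_injective.extend_apply v (0 : α → R) x
  have extend_notMem (v : S → R) {x : α} (hx : x ∉ S) : extend v x = 0 :=
    Function.extend_apply' v (0 : α → R) x fun ⟨y, hy⟩ => hx (hy ▸ y.2)
  let restrict : (α → R) →ₗ[R] (T → R) := LinearMap.funLeft R R Subtype.val
  have hinj : Function.Injective (restrict ∘ₗ A.vecMulLinear ∘ₗ extend) := by
    refine (injective_iff_map_eq_zero _).2 fun v hv => ?_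
    have hker : extend v ᵥ* A = 0 := by
      ext y
      by_cases hy : y ∈ T
      · exact congrFun hv ⟨y, hy⟩
      · refine sum_eq_zero fun x _ => ?_
        by_cases hx : x ∈ S
        · have hA_zero : A x y = 0 := by_contra fun h => hy (hT x hx y h)
          simp only [hA_zero, mul_zero]
        · simp only [extend_notMem v hx, zero_mul]
    have hext := eq_zero_of_vecMul_eq_zero_of_commutator_eq_diagonal hA
      (fun x hx => hd x (not_imp_comm.1 (extend_notMem v) hx)) hker
    ext x
    rw [← extend_mem v, hext, Pi.zero_apply, Pi.zero_apply]
  simpa only [Fintype.card_coe] using card_le_of_injective R _ hinj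

theorem exists_injOn_of_commutator_eq_diagonal (hA : A * Aᵀ - Aᵀ * A = diagonal d) :
    ∃ g : α → α, Set.InjOn g {x | 0 < d x} ∧ ∀ x, 0 < d x → A x (g x) ≠ 0 := by
  obtain ⟨g, hg_inj, hg⟩ :=
    (Fintype.all_card_le_filter_rel_iff_exists_injective
      fun (x : {x // 0 < d x}) y => A x y ≠ 0).1 fun S => by
        rw [← card_map (Function.Embedding.subtype _)]
        refine card_le_card_of_commutator_eq_diagonal hA (fun x hx => ?_) fun x hx y hxy => ?_
        · obtain ⟨z, -, rfl⟩ := mem_map.1 hx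
          exact z.2
        · obtain ⟨z, hz, rfl⟩ := mem_map.1 hx
          exact mem_filter.2 ⟨mem_univ y, z, hz, hxy⟩
  have hext (x : {x // 0 < d x}) : Function.extend Subtype.val g id x = g x :=
    Subtype.val_injective.extend_apply g id x
  refine ⟨Function.extend Subtype.val g id, fun x hx y hy hxy => ?_, fun x hx => ?_⟩
  · rw [hext ⟨x, hx⟩, hext ⟨y, hy⟩] at hxy
    exact congrArg Subtype.val (hg_inj hxy)
  · rw [hext ⟨x, hx⟩]
    exact hg ⟨x, hx⟩

end Commutator

section PartialEquivs

variable {α ι : Type*} [Fintype ι]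

/-- The total weight of the partial bijections `e k` defined at `x` minus the total weight of those
having `x` in their range: the net weight of the moves leaving `x`. -/
def netWeight (w : ι → ℝ) (e : ι → α ≃. α) (x : α) : ℝ :=
  ∑ k, w k * ((if (e k x).isSome then 1 else 0) - (if ((e k).symm x).isSome then 1 else 0))

lemma netWeight_symm (w : ι → ℝ) (e : ι → α ≃. α) (x : α) :
    netWeight w (fun k => (e k).symm) x = -netWeight w e x := by
  simp only [netWeight, PEquiv.symm_symm, ← sum_neg_distrib, ← mul_neg, neg_sub]
  rfl

variable [DecidableEq α]

/-- The matrix of the weighted sum of the partial bijections `e k`. The square roots make `w k` the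
coefficient of `e k` in the commutator of this matrix with its transpose. -/
noncomputable def moveMatrix (w : ι → ℝ) (e : ι → α ≃. α) : Matrix α α ℝ :=
  ∑ k, √(w k) • (e k).toMatrix

lemma exists_mem_of_moveMatrix_ne_zero {w : ι → ℝ} {e : ι → α ≃. α} {x y : α}
    (h : moveMatrix w e x y ≠ 0) : ∃ k, y ∈ e k x := by
  contrapose! h
  simp only [moveMatrix, Matrix.sum_apply, Matrix.smul_apply, PEquiv.toMatrix_apply, h, if_false,
    smul_zero, sum_const_zero]

variable [Fintype α]

lemma toMatrix_mul_transpose_sub (f : α ≃. α) :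
    (f.toMatrix * f.toMatrixᵀ - f.toMatrixᵀ * f.toMatrix : Matrix α α ℝ) =
      diagonal fun x => (if (f x).isSome then 1 else 0) - (if (f.symm x).isSome then 1 else 0) := by
  rw [← PEquiv.toMatrix_symm, ← PEquiv.toMatrix_trans, ← PEquiv.toMatrix_trans,
    PEquiv.self_trans_symm, PEquiv.symm_trans_self]
  ext x y
  by_cases hxy : x = y
  · subst hxy
    simp [PEquiv.toMatrix_apply]
  · simp [PEquiv.toMatrix_apply, hxy, Ne.symm hxy]

lemma moveMatrix_commutator {w : ι → ℝ} (hw : ∀ k, 0 ≤ w k) {e : ι → α ≃. α}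
    (he : Pairwise fun j k => (e j).symm.trans (e k) = (e k).trans (e j).symm) :
    moveMatrix w e * (moveMatrix w e)ᵀ - (moveMatrix w e)ᵀ * moveMatrix w e =
      diagonal (netWeight w e) := by
  have hoff (j k : ι) (hjk : j ≠ k) :
      ((e k).toMatrix * (e j).toMatrixᵀ - (e j).toMatrixᵀ * (e k).toMatrix : Matrix α α ℝ) = 0 := by
    rw [← PEquiv.toMatrix_symm, ← PEquiv.toMatrix_trans, ← PEquiv.toMatrix_trans, he hjk, sub_self]
  calc moveMatrix w e * (moveMatrix w e)ᵀ - (moveMatrix w e)ᵀ * moveMatrix w e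
    _ = ∑ k, ∑ j, (√(w k) * √(w j)) •
          ((e k).toMatrix * (e j).toMatrixᵀ - (e j).toMatrixᵀ * (e k).toMatrix) := by
        simp only [moveMatrix, transpose_sum, transpose_smul, sum_mul_sum, smul_mul_smul_comm,
          smul_sub, sum_sub_distrib]
        congr 1
        rw [sum_comm]
        simp only [mul_comm]
    _ = ∑ k, w k • ((e k).toMatrix * (e k).toMatrixᵀ - (e k).toMatrixᵀ * (e k).toMatrix) := by
        refine sum_congr rfl fun k _ => ?_
        rw [sum_eq_single_of_mem k (mem_univ k) fun j _ hj => by rw [hoff j k hj, smul_zero],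
          Real.mul_self_sqrt (hw k)]
    _ = diagonal (netWeight w e) := by
        simp only [toMatrix_mul_transpose_sub]
        ext x y
        by_cases hxy : x = y
        · subst hxy
          simp [netWeight, Matrix.sum_apply]
        · simp [Matrix.sum_apply, hxy]

end PartialEquivs

theorem exists_injOn_mem_of_netWeight_pos {α ι : Type*} [Finite α] [Fintype ι] {w : ι → ℝ}
    (hw : ∀ k, 0 ≤ w k) {e : ι → α ≃. α}
    (he : Pairwise fun j k => (e j).symm.trans (e k) = (e k).trans (e j).symm) :
    ∃ g : α → α, Set.InjOn g {x | 0 < netWeight w e x} ∧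
      ∀ x, 0 < netWeight w e x → ∃ k, g x ∈ e k x := by
  classical
  cases nonempty_fintype α
  obtain ⟨g, hg_inj, hg⟩ := exists_injOn_of_commutator_eq_diagonal (moveMatrix_commutator hw he)
  exact ⟨g, hg_inj, fun x hx => exists_mem_of_moveMatrix_ne_zero (hg x hx)⟩

section Climb

variable {α : Type*} {rk : α → ℤ} {m : ℤ} {g : α → α} {r : α → α → Prop}

/-- Follow `g`, which is meant to raise the rank by one below rank `m`, from `x` up to rank `m`.
Nothing happens at rank at least `m`, since `Int.toNat` truncates. -/
def climb (rk : α → ℤ) (m : ℤ) (g : α → α) (x : α) : α := g^[(m - rk x).toNat] x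

lemma climb_of_le_rank {x : α} (hx : m ≤ rk x) : climb rk m g x = x := by
  rw [climb, Int.toNat_of_nonpos (by lia), Function.iterate_zero_apply]

lemma rank_iterate (hg : ∀ x, rk x < m → rk (g x) = rk x + 1) {k : ℕ} {x : α}
    (hx : rk x + k ≤ m) : rk (g^[k] x) = rk x + k := by
  induction k with
  | zero => simp
  | succ k ih =>
    rw [Function.iterate_succ_apply', hg _ (by grind), ih (by grind)]
    grind

lemma rank_climb (hg : ∀ x, rk x < m → rk (g x) = rk x + 1) {x : α} (hx : rk x ≤ m) :
    rk (climb rk m g x) = m := by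
  rw [climb, rank_iterate hg (by lia)]
  lia

lemma injOn_iterate (hg : ∀ x, rk x < m → rk (g x) = rk x + 1)
    (hg_inj : Set.InjOn g {x | rk x < m}) (k : ℕ) : Set.InjOn g^[k] {x | rk x + k ≤ m} := by
  induction k with
  | zero => exact fun x _ y _ hxy => hxy
  | succ k ih =>
    intro x hx y hy hxy
    simp only [Set.mem_ofPred_eq, Nat.cast_succ] at hx hy
    refine ih (show rk x + k ≤ m by lia) (show rk y + k ≤ m by lia) (hg_inj ?_ ?_ ?_)
    · simp only [Set.mem_ofPred_eq, rank_iterate hg (x := x) (k := k) (by lia)]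
      lia
    · simp only [Set.mem_ofPred_eq, rank_iterate hg (x := y) (k := k) (by lia)]
      lia
    · simpa only [Function.iterate_succ_apply'] using hxy

variable [IsPreorder α r]

lemma rel_iterate (hg : ∀ x, rk x < m → rk (g x) = rk x + 1) (hr : ∀ x, rk x < m → r x (g x))
    {k : ℕ} {x : α} (hx : rk x + k ≤ m) : r x (g^[k] x) := by
  induction k with
  | zero => exact refl x
  | succ k ih =>
    rw [Nat.cast_succ] at hx
    rw [Function.iterate_succ_apply']
    exact _root_.trans (ih (by lia)) (hr _ (by rw [rank_iterate hg (by lia)]; lia))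

lemma rel_climb (hg : ∀ x, rk x < m → rk (g x) = rk x + 1) (hr : ∀ x, rk x < m → r x (g x))
    {x : α} (hx : rk x ≤ m) : r x (climb rk m g x) :=
  rel_iterate hg hr (by lia)

lemma rel_of_climb_eq_climb (hg : ∀ x, rk x < m → rk (g x) = rk x + 1)
    (hr : ∀ x, rk x < m → r x (g x)) (hg_inj : Set.InjOn g {x | rk x < m}) {x y : α}
    (hxy : rk x ≤ rk y) (hy : rk y ≤ m) (h : climb rk m g x = climb rk m g y) : r x y := by
  obtain ⟨k, hk⟩ := Int.le.dest hxy
  have hstep : (m - rk x).toNat = (m - rk y).toNat + k := by lia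
  rw [climb, climb, hstep, Function.iterate_add_apply] at h
  have hmeet : g^[k] x = y := by
    refine injOn_iterate hg hg_inj _ ?_ (show rk y + _ ≤ m by lia) h
    rw [Set.mem_ofPred_eq, rank_iterate hg (by lia)]
    lia
  exact hmeet ▸ rel_iterate hg hr (by lia)

lemma rel_or_rel_of_climb_eq_climb (hg : ∀ x, rk x < m → rk (g x) = rk x + 1)
    (hr : ∀ x, rk x < m → r x (g x)) (hg_inj : Set.InjOn g {x | rk x < m}) {x y : α}
    (hx : rk x ≤ m) (hy : rk y ≤ m) (h : climb rk m g x = climb rk m g y) : r x y ∨ r y x :=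
  (le_total (rk x) (rk y)).imp (rel_of_climb_eq_climb hg hr hg_inj · hy h)
    (rel_of_climb_eq_climb hg hr hg_inj · hx h.symm)

theorem exists_retraction_onto_level {up down : α → α}
    (hup : ∀ x, rk x < m → r x (up x) ∧ rk (up x) = rk x + 1)
    (hup_inj : Set.InjOn up {x | rk x < m})
    (hdown : ∀ x, m < rk x → r (down x) x ∧ rk x = rk (down x) + 1)
    (hdown_inj : Set.InjOn down {x | m < rk x}) :
    ∃ φ : α → α, (∀ x, rk (φ x) = m) ∧ (∀ x, rk x = m → φ x = x) ∧
      ∀ x y, φ x = φ y → r x y ∨ r y x := by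
  have hup_rk := fun x hx => (hup x hx).2
  have hup_rel := fun x hx => (hup x hx).1
  have hdown_rk (x : α) (hx : -rk x < -m) : -rk (down x) = -rk x + 1 := by
    have := (hdown x (by lia)).2
    lia
  have hdown_rel (x : α) (hx : -rk x < -m) : Function.swap r x (down x) := (hdown x (by lia)).1
  have hdown_inj' : Set.InjOn down {x | -rk x < -m} := by
    simpa only [neg_lt_neg_iff] using hdown_inj
  have : IsPreorder α (Function.swap r) :=
    { refl := refl
      trans := fun _ _ _ hxy hyz => _root_.trans (r := r) hyz hxy }
  set ψ := climb (fun x => -rk x) (-m) down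
  have hψ_rk (x : α) (hx : ¬rk x ≤ m) : rk (ψ x) = m :=
    neg_inj.1 (rank_climb hdown_rk (by lia))
  have hψ_rel (x : α) (hx : ¬rk x ≤ m) : r (ψ x) x :=
    rel_climb (r := Function.swap r) hdown_rk hdown_rel (by lia)
  refine ⟨fun x => if rk x ≤ m then climb rk m up x else ψ x,
    fun x => ?_, fun x hx => ?_, fun x y hxy => ?_⟩
  · beta_reduce
    split_ifs with hx
    · exact rank_climb hup_rk hx
    · exact hψ_rk x hx
  · beta_reduce
    rw [if_pos hx.le]
    exact climb_of_le_rank hx.ge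
  · beta_reduce at hxy
    split_ifs at hxy with hx hy hy
    · exact rel_or_rel_of_climb_eq_climb hup_rk hup_rel hup_inj hx hy hxy
    · exact .inl (_root_.trans (rel_climb hup_rk hup_rel hx) (hxy ▸ hψ_rel y hy))
    · exact .inr (_root_.trans (rel_climb hup_rk hup_rel hy) (hxy ▸ hψ_rel x hx))
    · exact (rel_or_rel_of_climb_eq_climb (r := Function.swap r) hdown_rk hdown_rel hdown_inj'
        (by lia) (by lia) hxy).symm

end Climb

section ChainPartition

variable {α : Type*} {r : α → α → Prop}

lemma card_le_card_of_isAntichain_of_isChain {L : Finset α} {P : Finset (Finset α)}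
    (hL : IsAntichain r (L : Set α)) (hP : ∀ C ∈ P, IsChain r (C : Set α))
    (hcover : ∀ x ∈ L, ∃ C ∈ P, x ∈ C) : #L ≤ #P :=
  card_le_card_of_forall_subsingleton (· ∈ ·) hcover fun C hC =>
    (inter_subsingleton_of_isChain_of_isAntichain (hP C hC) hL).anti fun _ hx => ⟨hx.2, hx.1⟩

lemma exists_chain_partition_of_retraction [Finite α] {L : Finset α} {φ : α → α}
    (hφ : ∀ x, φ x ∈ L) (hL : ∀ x ∈ L, φ x = x) (hr : ∀ x y, φ x = φ y → r x y ∨ r y x) :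
    ∃ P : Finset (Finset α), (∀ C ∈ P, C.Nonempty) ∧
      (∀ C ∈ P, ∀ x ∈ C, ∀ y ∈ C, r x y ∨ r y x) ∧ (∀ x, ∃! C, C ∈ P ∧ x ∈ C) ∧ #P = #L := by
  classical
  cases nonempty_fintype α
  let fiber (c : α) : Finset α := {x | φ x = c}
  have mem_fiber {c x : α} : x ∈ fiber c ↔ φ x = c := by simp [fiber]
  have hself {c : α} (hc : c ∈ L) : c ∈ fiber c := mem_fiber.2 (hL c hc)
  refine ⟨L.image fiber, ?_, ?_, fun x => ?_, card_image_of_injOn fun c hc d _ hcd => ?_⟩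
  · simp only [forall_mem_image]
    exact fun c hc => ⟨c, hself hc⟩
  · simp only [forall_mem_image, mem_fiber]
    exact fun c _ x hx y hy => hr x y (hx.trans hy.symm)
  · refine ⟨fiber (φ x), ⟨mem_image_of_mem _ (hφ x), mem_fiber.2 rfl⟩, ?_⟩
    rintro _ ⟨hC, hx⟩
    obtain ⟨c, -, rfl⟩ := mem_image.1 hC
    rw [mem_fiber.1 hx]
  · have hcd' : c ∈ fiber d := hcd ▸ hself hc
    exact (hL c hc).symm.trans (mem_fiber.1 hcd')

end ChainPartition

namespace HammingCube

variable {n : ℕ}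

/-- The rank function of `⪯₁`: the sum of the positions of the ones of a string. -/
def rank (x : Fin n → Bool) : ℕ := ∑ i, if x i then (i : ℕ) + 1 else 0

lemma rank_update_add (x : Fin n → Bool) (k : Fin n) (b : Bool) :
    rank (Function.update x k b) + (if x k then (k : ℕ) + 1 else 0) =
      rank x + (if b then (k : ℕ) + 1 else 0) := by
  have hrest : ∑ i ∈ univ.erase k, (if Function.update x k b i then (i : ℕ) + 1 else 0) =
      ∑ i ∈ univ.erase k, if x i then (i : ℕ) + 1 else 0 :=
    sum_congr rfl fun i hi => by rw [Function.update_of_ne (ne_of_mem_erase hi)]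
  rw [rank, rank, ← add_sum_erase _ _ (mem_univ k), ← add_sum_erase univ _ (mem_univ k), hrest,
    Function.update_self]
  ring

lemma rank_addition {x : Fin n → Bool} {k : Fin n} (hk : x k = false) :
    rank (Function.update x k true) = rank x + (k + 1) := by
  simpa [hk] using rank_update_add x k true

lemma rank_leftSwap {x : Fin n → Bool} {k : Fin n} (hk : (k : ℕ) + 1 < n) (hone : x k = true)
    (hzero : x ⟨k + 1, hk⟩ = false) :
    rank (Function.update (Function.update x k false) ⟨k + 1, hk⟩ true) = rank x + 1 := by
  have hne : (⟨k + 1, hk⟩ : Fin n) ≠ k := fun h => by simpa using congrArg Fin.val h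
  have hremove := rank_update_add x k false
  rw [rank_addition (by rw [Function.update_of_ne hne, hzero])]
  simp only [hone, if_true, Bool.false_eq_true, if_false] at hremove ⊢
  lia

lemma rank_lt_of_cubeStep {x y : Fin n → Bool} (h : CubeStep x y) : rank x < rank y := by
  rcases h with ⟨k, hk, rfl⟩ | ⟨k, hk, hone, hzero, rfl⟩
  · rw [rank_addition hk]
    lia
  · rw [rank_leftSwap hk hone hzero]
    lia

instance : IsPreorder (Fin n → Bool) le1 :=
  inferInstanceAs (IsPreorder _ (Relation.ReflTransGen CubeStep))

lemma eq_or_rank_lt_of_le1 {x y : Fin n → Bool} (h : le1 x y) : x = y ∨ rank x < rank y := by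
  induction h with
  | refl => exact .inl rfl
  | tail _ hstep ih =>
    have hlt := rank_lt_of_cubeStep hstep
    exact .inr (ih.elim (fun heq => heq ▸ hlt) hlt.trans')

lemma isAntichain_rank_eq (K : ℕ) : IsAntichain le1 {x : Fin n → Bool | rank x = K} :=
  fun _ hx _ hy hne hle => ((eq_or_rank_lt_of_le1 hle).resolve_left hne).ne (hx.trans hy.symm)

/-- Flip the bits `k` and `k - 1` (only bit `0` when `k = 0`). -/
def flip (k : Fin n) (x : Fin n → Bool) : Fin n → Bool :=
  fun i => xor (x i) (decide (i = k ∨ (i : ℕ) + 1 = k))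

/-- The string `x` admits the rank-one step at `k`: a left-swap of the bits `k - 1` and `k`, or the
addition of bit `0` when `k = 0`. -/
def CanRaise (k : Fin n) (x : Fin n → Bool) : Prop :=
  x k = false ∧ ∀ i : Fin n, (i : ℕ) + 1 = k → x i = true

/-- The string `x` is the result of the rank-one step at `k`. -/
def CanLower (k : Fin n) (x : Fin n → Bool) : Prop :=
  x k = true ∧ ∀ i : Fin n, (i : ℕ) + 1 = k → x i = false

lemma flip_flip (k : Fin n) (x : Fin n → Bool) : flip k (flip k x) = x := by
  ext i
  simp [flip]

lemma flip_comm (j k : Fin n) (x : Fin n → Bool) : flip j (flip k x) = flip k (flip j x) :=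
  funext fun i => Bool.xor_right_comm (x i) _ _

lemma canLower_flip {k : Fin n} {x : Fin n → Bool} : CanLower k (flip k x) ↔ CanRaise k x := by
  simp only [CanLower, CanRaise, flip]
  grind

lemma canRaise_flip {k : Fin n} {x : Fin n → Bool} : CanRaise k (flip k x) ↔ CanLower k x := by
  rw [← canLower_flip, flip_flip]

-- Both sides are false when `j` and `k` are adjacent: the two steps disagree on the shared bit.
lemma canLower_and_canRaise_flip_iff {j k : Fin n} (h : j ≠ k) (x : Fin n → Bool) :
    CanLower j x ∧ CanRaise k (flip j x) ↔ CanRaise k x ∧ CanLower j (flip k x) := by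
  have hval : (j : ℕ) ≠ k := Fin.val_ne_of_ne h
  simp only [CanLower, CanRaise, flip]
  constructor <;> rintro ⟨⟨hx, hx'⟩, hy, hy'⟩ <;>
    refine ⟨⟨?_, fun i hi => ?_⟩, ?_, fun i hi => ?_⟩ <;> grind

open Classical in
/-- The rank-one step at `k`, as a partial bijection of the cube. -/
noncomputable def raise (k : Fin n) : (Fin n → Bool) ≃. (Fin n → Bool) where
  toFun x := if CanRaise k x then some (flip k x) else none
  invFun x := if CanLower k x then some (flip k x) else none
  inv x y := by
    simp only [Option.ite_none_right_eq_some, Option.some.injEq]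
    constructor
    · rintro ⟨hy, rfl⟩
      exact ⟨canRaise_flip.2 hy, flip_flip k y⟩
    · rintro ⟨hx, rfl⟩
      exact ⟨canLower_flip.2 hx, flip_flip k x⟩

lemma mem_raise {k : Fin n} {x y : Fin n → Bool} : y ∈ raise k x ↔ CanRaise k x ∧ flip k x = y := by
  simp [raise]

lemma mem_raise_symm {k : Fin n} {x y : Fin n → Bool} :
    y ∈ (raise k).symm x ↔ CanLower k x ∧ flip k x = y := by
  simp [raise, PEquiv.symm]

lemma isSome_raise {k : Fin n} {x : Fin n → Bool} : (raise k x).isSome ↔ CanRaise k x := by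
  simp [raise]

lemma isSome_raise_symm {k : Fin n} {x : Fin n → Bool} :
    ((raise k).symm x).isSome ↔ CanLower k x := by
  simp [raise, PEquiv.symm]

lemma raise_symm_trans_raise {j k : Fin n} (h : j ≠ k) :
    (raise j).symm.trans (raise k) = (raise k).trans (raise j).symm := by
  refine PEquiv.ext fun x => Option.ext fun y => ?_
  have hiff := canLower_and_canRaise_flip_iff h x
  simp only [← Option.mem_def, PEquiv.mem_trans, mem_raise, mem_raise_symm]
  constructor
  · rintro ⟨_, ⟨hj, rfl⟩, hk, rfl⟩
    obtain ⟨hk', hj'⟩ := hiff.1 ⟨hj, hk⟩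
    exact ⟨_, ⟨hk', rfl⟩, hj', flip_comm j k x⟩
  · rintro ⟨_, ⟨hk, rfl⟩, hj, rfl⟩
    obtain ⟨hj', hk'⟩ := hiff.2 ⟨hk, hj⟩
    exact ⟨_, ⟨hj', rfl⟩, hk', flip_comm k j x⟩

lemma flip_zero_of_canRaise {h : 0 < n} {x : Fin n → Bool} (hx : CanRaise ⟨0, h⟩ x) :
    flip ⟨0, h⟩ x = Function.update x ⟨0, h⟩ true := by
  ext i
  simp only [flip, Function.update_apply]
  grind [hx.1]

lemma flip_succ_of_canRaise {k : ℕ} {h : k + 1 < n} {x : Fin n → Bool}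
    (hx : CanRaise ⟨k + 1, h⟩ x) :
    flip ⟨k + 1, h⟩ x =
      Function.update (Function.update x ⟨k, by lia⟩ false) ⟨k + 1, h⟩ true := by
  have hone : x ⟨k, by lia⟩ = true := hx.2 _ rfl
  ext i
  simp only [flip, Function.update_apply]
  grind [hx.1]

lemma cubeStep_and_rank_of_mem_raise {k : Fin n} {x y : Fin n → Bool} (h : y ∈ raise k x) :
    CubeStep x y ∧ rank y = rank x + 1 := by
  obtain ⟨hx, rfl⟩ := mem_raise.1 h
  rcases k with ⟨_ | k, hk⟩
  · rw [flip_zero_of_canRaise hx]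
    exact ⟨.inl ⟨_, hx.1, rfl⟩, rank_addition hx.1⟩
  · have hone : x ⟨k, by lia⟩ = true := hx.2 _ rfl
    rw [flip_succ_of_canRaise hx]
    exact ⟨.inr ⟨⟨k, by lia⟩, hk, hone, hx.1, rfl⟩, rank_leftSwap (k := ⟨k, by lia⟩) hk hone hx.1⟩

/-- The weight of the rank-one step at `k`. Up to the factor `1 / 2` at `k = 0` it vanishes at
`k = n` and decreases by `2 * (k + 1)` from `k` to `k + 1`, so that summation by parts turns the net
weight of the steps into a multiple of the rank. -/
noncomputable def stepWeight (n k : ℕ) : ℝ :=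
  (n * (n + 1) - k * (k + 1)) * (if k = 0 then 1 / 2 else 1)

lemma stepWeight_nonneg {k : ℕ} (hk : k ≤ n) : 0 ≤ stepWeight n k := by
  have : (k : ℝ) * (k + 1) ≤ n * (n + 1) := by gcongr
  exact mul_nonneg (sub_nonneg.2 this) (by split_ifs <;> norm_num)

/-- The bit at position `k` (that is, at index `k - 1`), as a real number. Position `0` carries a
virtual half bit, which lets the step at index `0` follow the same formula as the others. -/
noncomputable def paddedBit (x : Fin n → Bool) : ℕ → ℝ
  | 0 => 1 / 2
  | k + 1 => if h : k < n then (if x ⟨k, h⟩ then 1 else 0) else 0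

lemma rank_eq_sum_paddedBit (x : Fin n → Bool) :
    (rank x : ℝ) = ∑ k ∈ range n, ((k : ℝ) + 1) * paddedBit x (k + 1) := by
  rw [← Fin.sum_univ_eq_sum_range (fun k => ((k : ℝ) + 1) * paddedBit x (k + 1)), rank]
  simp [paddedBit]

open Classical in
lemma stepWeight_mul_eq (x : Fin n → Bool) (k : Fin n) :
    stepWeight n k * ((if CanRaise k x then 1 else 0) - (if CanLower k x then 1 else 0)) =
      ((n : ℝ) * (n + 1) - k * (k + 1)) * (paddedBit x k - paddedBit x (k + 1)) := by
  rw [stepWeight, mul_assoc]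
  congr 1
  rcases k with ⟨_ | k, hk⟩
  · cases hbit : x ⟨0, hk⟩ <;> norm_num [CanRaise, CanLower, paddedBit, hbit, hk]
  · have hprev (c : Bool) : (∀ i : Fin n, (i : ℕ) + 1 = k + 1 → x i = c) ↔ x ⟨k, by lia⟩ = c :=
      ⟨fun h => h _ rfl, fun h i hi => by rwa [show i = ⟨k, by lia⟩ from Fin.ext (by lia)]⟩
    have hk' : k < n := by lia
    simp only [CanRaise, CanLower, hprev]
    cases hbit : x ⟨k + 1, hk⟩ <;> cases hbit' : x ⟨k, hk'⟩ <;>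
      simp [paddedBit, hbit, hbit', hk, hk']

lemma netWeight_raise (x : Fin n → Bool) :
    netWeight (fun k : Fin n => stepWeight n k) raise x = (n : ℝ) * (n + 1) / 2 - 2 * rank x := by
  classical
  let w (k : ℕ) : ℝ := n * (n + 1) - k * (k + 1)
  have hparts (k : ℕ) : w k * (paddedBit x k - paddedBit x (k + 1)) =
      w k * paddedBit x k - w (k + 1) * paddedBit x (k + 1) -
        2 * (((k : ℝ) + 1) * paddedBit x (k + 1)) := by
    simp only [w, Nat.cast_succ]
    ring
  calc netWeight (fun k : Fin n => stepWeight n k) raise x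
    _ = ∑ k : Fin n, w k * (paddedBit x k - paddedBit x (k + 1)) := by
        simp only [netWeight, isSome_raise, isSome_raise_symm, stepWeight_mul_eq, w]
    _ = ∑ k ∈ range n, w k * (paddedBit x k - paddedBit x (k + 1)) :=
        Fin.sum_univ_eq_sum_range (fun k => w k * (paddedBit x k - paddedBit x (k + 1))) n
    _ = w 0 * paddedBit x 0 - w n * paddedBit x n - 2 * rank x := by
        simp only [hparts]
        rw [sum_sub_distrib, ← mul_sum, sum_range_sub' (fun k => w k * paddedBit x k),
          ← rank_eq_sum_paddedBit]
    _ = (n : ℝ) * (n + 1) / 2 - 2 * rank x := by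
        simp only [w, paddedBit, Nat.cast_zero]
        ring

lemma exists_matching_up (n : ℕ) : ∃ up : (Fin n → Bool) → (Fin n → Bool),
    Set.InjOn up {x | 4 * rank x < n * (n + 1)} ∧
      ∀ x, 4 * rank x < n * (n + 1) → CubeStep x (up x) ∧ rank (up x) = rank x + 1 := by
  obtain ⟨up, hup_inj, hup⟩ := exists_injOn_mem_of_netWeight_pos
    (w := fun k : Fin n => stepWeight n k) (fun k => stepWeight_nonneg k.2.le)
    (fun _ _ => raise_symm_trans_raise)
  have hpos (x : Fin n → Bool) (hx : 4 * rank x < n * (n + 1)) :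
      0 < netWeight (fun k : Fin n => stepWeight n k) raise x := by
    have : (4 * rank x : ℝ) < n * (n + 1) := by exact_mod_cast hx
    rw [netWeight_raise]
    linarith
  refine ⟨up, hup_inj.mono hpos, fun x hx => ?_⟩
  obtain ⟨k, hk⟩ := hup x (hpos x hx)
  exact cubeStep_and_rank_of_mem_raise hk

lemma exists_matching_down (n : ℕ) : ∃ down : (Fin n → Bool) → (Fin n → Bool),
    Set.InjOn down {x | n * (n + 1) < 4 * rank x} ∧
      ∀ x, n * (n + 1) < 4 * rank x → CubeStep (down x) x ∧ rank x = rank (down x) + 1 := by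
  obtain ⟨down, hdown_inj, hdown⟩ := exists_injOn_mem_of_netWeight_pos
    (w := fun k : Fin n => stepWeight n k) (fun k => stepWeight_nonneg k.2.le)
    (e := fun k => (raise k).symm) (fun _ _ hjk => (raise_symm_trans_raise hjk.symm).symm)
  have hpos (x : Fin n → Bool) (hx : n * (n + 1) < 4 * rank x) :
      0 < netWeight (fun k : Fin n => stepWeight n k) (fun k => (raise k).symm) x := by
    have : (n * (n + 1) : ℝ) < 4 * rank x := by exact_mod_cast hx
    rw [netWeight_symm, netWeight_raise]
    linarith
  refine ⟨down, hdown_inj.mono hpos, fun x hx => ?_⟩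
  obtain ⟨k, hk⟩ := hdown x (hpos x hx)
  exact cubeStep_and_rank_of_mem_raise ((raise k).mem_iff_mem.1 hk)

theorem exists_retraction_onto_middle_rank (n : ℕ) :
    ∃ (m : ℕ) (φ : (Fin n → Bool) → (Fin n → Bool)), (∀ x, rank (φ x) = m) ∧
      (∀ x, rank x = m → φ x = x) ∧ ∀ x y, φ x = φ y → le1 x y ∨ le1 y x := by
  obtain ⟨up, hup_inj, hup⟩ := exists_matching_up n
  obtain ⟨down, hdown_inj, hdown⟩ := exists_matching_down n
  set m := n * (n + 1) / 4
  obtain ⟨φ, hφ_rank, hφ_fix, hφ_chain⟩ := exists_retraction_onto_level (r := le1)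
    (rk := fun x : Fin n → Bool => (rank x : ℤ)) (m := m) (up := up) (down := down)
    (fun x hx => (hup x (by lia)).imp .single (by lia)) (hup_inj.mono fun x hx => by grind)
    (fun x hx => (hdown x (by lia)).imp .single (by lia)) (hdown_inj.mono fun x hx => by grind)
  exact ⟨m, φ, fun x => by exact_mod_cast hφ_rank x, fun x hx => hφ_fix x (by exact_mod_cast hx),
    hφ_chain⟩

/-- The characteristic string of a set of positions in `{1, …, n}`. -/
def ofPositions (n : ℕ) (s : Finset ℕ) : Fin n → Bool := fun i => decide ((i : ℕ) + 1 ∈ s)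

lemma rank_ofPositions {s : Finset ℕ} (hs : s ⊆ Icc 1 n) : rank (ofPositions n s) = s.sum id := by
  calc rank (ofPositions n s)
    _ = ∑ i ∈ range n, if i + 1 ∈ s then i + 1 else 0 := by
        rw [← Fin.sum_univ_eq_sum_range (fun i => if i + 1 ∈ s then i + 1 else 0)]
        simp only [rank, ofPositions, decide_eq_true_eq]
    _ = ∑ p ∈ Icc 1 n, if p ∈ s then p else 0 := by
        rw [range_eq_Ico, sum_Ico_add' (fun p => if p ∈ s then p else 0)]
        rfl
    _ = s.sum id := by
        rw [sum_ite_mem, inter_eq_right.2 hs]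
        rfl

lemma injOn_ofPositions : Set.InjOn (ofPositions n) ((Icc 1 n).powerset : Set (Finset ℕ)) := by
  intro s hs t ht hst
  simp only [coe_powerset, Set.mem_preimage, Set.mem_powerset_iff, coe_subset] at hs ht
  ext p
  by_cases hp : p ∈ Icc 1 n
  · obtain ⟨hp1, hpn⟩ := mem_Icc.1 hp
    have hbit := congrFun hst ⟨p - 1, by lia⟩
    simpa only [ofPositions, Nat.sub_add_cancel hp1, decide_eq_decide] using hbit
  · exact iff_of_false (mt (hs ·) hp) (mt (ht ·) hp)

lemma exists_ofPositions_eq (x : Fin n → Bool) : ∃ s ⊆ Icc 1 n, ofPositions n s = x := by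
  refine ⟨(univ.filter fun i => x i = true).image fun i : Fin n => (i : ℕ) + 1, ?_, ?_⟩
  · simp only [image_subset_iff, mem_Icc]
    exact fun i _ => by lia
  · ext i
    simp [ofPositions, Fin.val_inj]

lemma card_rank_eq (n K : ℕ) : #{x : Fin n → Bool | rank x = K} = levelCard n K := by
  refine (card_nbij (ofPositions n) (fun s hs => ?_) (injOn_ofPositions.mono ?_)
    fun x hx => ?_).symm
  · rw [mem_coe, mem_filter] at hs
    exact mem_coe.2 <| mem_filter.2
      ⟨mem_univ _, (rank_ofPositions (mem_powerset.1 hs.1)).trans hs.2⟩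
  · exact coe_subset.2 (filter_subset _ _)
  · obtain ⟨s, hs, rfl⟩ := exists_ofPositions_eq x
    refine ⟨s, mem_coe.2 (mem_filter.2 ⟨mem_powerset.2 hs, ?_⟩), rfl⟩
    rw [← rank_ofPositions hs]
    exact (mem_filter.1 (mem_coe.1 hx)).2

lemma levelCard_le_M (n K : ℕ) : levelCard n K ≤ M n :=
  le_ciSup (f := levelCard n)
    ⟨#(Icc 1 n).powerset, by rintro _ ⟨K, rfl⟩; exact card_filter_le _ _⟩ K

lemma M_le_card_of_chain_cover {P : Finset (Finset (Fin n → Bool))}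
    (hchain : ∀ C ∈ P, ∀ x ∈ C, ∀ y ∈ C, le1 x y ∨ le1 y x) (hcover : ∀ x, ∃ C ∈ P, x ∈ C) :
    M n ≤ #P := by
  refine ciSup_le fun K => ?_
  rw [← card_rank_eq]
  refine card_le_card_of_isAntichain_of_isChain (r := le1) ?_
    (fun C hC x hx y hy _ => hchain C hC x hx y hy) fun x _ => hcover x
  simpa only [coe_filter, mem_univ, true_and] using isAntichain_rank_eq K

end HammingCube

/-- The minimum number of chains into which the Hamming cube `({0,1}ⁿ, ⪯₁)` can
be partitioned equals `M n`: some partition into chains has exactly `M n` parts,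
and every partition into chains has at least `M n` parts. -/
theorem stmt6 (n : ℕ) :
    IsLeast {K : ℕ | ∃ P : Finset (Finset (Fin n → Bool)),
        (∀ C ∈ P, C.Nonempty) ∧
        (∀ C ∈ P, ∀ x ∈ C, ∀ y ∈ C, le1 x y ∨ le1 y x) ∧
        (∀ x : Fin n → Bool, ∃! C, C ∈ P ∧ x ∈ C) ∧
        P.card = K}
      (M n) := by
  have lower_bound {P : Finset (Finset (Fin n → Bool))}
      (hchain : ∀ C ∈ P, ∀ x ∈ C, ∀ y ∈ C, le1 x y ∨ le1 y x)
      (hpart : ∀ x, ∃! C, C ∈ P ∧ x ∈ C) : M n ≤ #P :=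
    HammingCube.M_le_card_of_chain_cover hchain fun x => (hpart x).exists
  constructor
  · obtain ⟨m, φ, hφ_rank, hφ_fix, hφ_chain⟩ := HammingCube.exists_retraction_onto_middle_rank n
    obtain ⟨P, hne, hchain, hpart, hcard⟩ := exists_chain_partition_of_retraction
      (L := {x | HammingCube.rank x = m}) (by simpa using hφ_rank) (by simpa using hφ_fix) hφ_chain
    refine ⟨P, hne, hchain, hpart, (lower_bound hchain hpart).antisymm' ?_⟩
    rw [hcard, HammingCube.card_rank_eq]
    exact HammingCube.levelCard_le_M n m
  · rintro _ ⟨P, -, hchain, hpart, rfl⟩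
    exact lower_bound hchain hpart
end
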